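/- arXiv:2604.21135 — 2 statements merged into one kernel-verified Lean document; each statement's English description precedes it below -/
import Mathlib

section
/- Let S be the signed double star consisting of a negative central edge z₁z₂, together with l ≥ 0 positive pendant edges z₁v₁,…,z₁v_l and one negative pendant edge z₁u attached at z₁, and r ≥ 0 positive pendant edges z₂w₁,…,z₂w_r attached at z₂ (so S is a (l+r+3, l+r, 2) signed graph). Then S is additively graceful if and only if l = 0. -/
/-- A signed graph on vertex type `V`: a finite set of positive edges and a
finite set of negative edges, disjoint from one another, with no loops. -/
structure SignedGraph (V : Type) [DecidableEq V] where
  posEdges : Finset (Sym2 V)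
  negEdges : Finset (Sym2 V)
  disjoint : Disjoint posEdges negEdges
  pos_not_diag : ∀ e ∈ posEdges, ¬ e.IsDiag
  neg_not_diag : ∀ e ∈ negEdges, ¬ e.IsDiag

/-- Induced label on a positive edge: `|f u - f v|`. -/
def posLabel {V : Type} (f : V → ℕ) : Sym2 V → ℕ :=
  Sym2.lift ⟨fun u v => Nat.dist (f u) (f v), fun u v => Nat.dist_comm _ _⟩

/-- Induced label on a negative edge: `f u + f v`. -/
def negLabel {V : Type} (f : V → ℕ) : Sym2 V → ℕ :=
  Sym2.lift ⟨fun u v => f u + f v, fun u v => Nat.add_comm _ _⟩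

/-- `f` is an additively graceful labeling of the signed graph `S`:
it is an injection into `{0, 1, …, m + ⌈(n+1)/2⌉}` whose induced labels on the
positive edges are exactly `{1, …, m}` and on the negative edges exactly
`{1, …, n}`, where `m` (resp. `n`) is the number of positive (negative) edges.
(Note that `⌈(n+1)/2⌉ = (n+2)/2` with natural-number division.) -/
def IsAddGraceful {V : Type} [DecidableEq V] (S : SignedGraph V) (f : V → ℕ) : Prop :=
  Function.Injective f ∧
  (∀ v : V, f v ≤ S.posEdges.card + (S.negEdges.card + 2) / 2) ∧
  S.posEdges.image (posLabel f) = Finset.Icc 1 S.posEdges.card ∧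
  S.negEdges.image (negLabel f) = Finset.Icc 1 S.negEdges.card

/-- Vertex type of a double star: the two centers `z₁, z₂`, the `a` positive
pendant neighbours and `b` negative pendant neighbours of `z₁`, and the `c`
positive pendant neighbours of `z₂`. -/
abbrev DSV (a b c : ℕ) : Type := (Unit ⊕ Unit) ⊕ (Fin a ⊕ Fin b ⊕ Fin c)

/-- the first central vertex `z₁` -/
def z1 {a b c : ℕ} : DSV a b c := Sum.inl (Sum.inl ())
/-- the second central vertex `z₂` -/
def z2 {a b c : ℕ} : DSV a b c := Sum.inl (Sum.inr ())
/-- the end `vᵢ` of the `i`-th positive pendant edge at `z₁` -/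
def vv {a b c : ℕ} (i : Fin a) : DSV a b c := Sum.inr (Sum.inl i)
/-- the end `uᵢ` of the `i`-th negative pendant edge at `z₁` -/
def uu {a b c : ℕ} (i : Fin b) : DSV a b c := Sum.inr (Sum.inr (Sum.inl i))
/-- the end `wᵢ` of the `i`-th positive pendant edge at `z₂` -/
def ww {a b c : ℕ} (i : Fin c) : DSV a b c := Sum.inr (Sum.inr (Sum.inr i))

/-- The signed double star with a *positive* central edge `z₁z₂`,
`a` positive and `b` negative pendant edges at `z₁`, and `c` positive pendant
edges at `z₂`. -/
def doubleStarPos (a b c : ℕ) : SignedGraph (DSV a b c) where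
  posEdges :=
    {s(z1, z2)} ∪ Finset.univ.image (fun i : Fin a => s(z1, vv i)) ∪
      Finset.univ.image (fun i : Fin c => s(z2, ww i))
  negEdges := Finset.univ.image (fun i : Fin b => s(z1, uu i))
  disjoint := by
    rw [Finset.disjoint_left]
    intro e he1 he2
    simp only [Finset.mem_union, Finset.mem_singleton, Finset.mem_image,
      Finset.mem_univ, true_and] at he1 he2
    obtain ⟨j, rfl⟩ := he2
    rcases he1 with (h | ⟨i, h⟩) | ⟨i, h⟩ <;>
      simp [z1, z2, vv, uu, ww, Sym2.eq_iff] at h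
  pos_not_diag := by
    intro e he
    simp only [Finset.mem_union, Finset.mem_singleton, Finset.mem_image,
      Finset.mem_univ, true_and] at he
    rcases he with (rfl | ⟨i, rfl⟩) | ⟨i, rfl⟩ <;>
      simp [z1, z2, vv, ww, Sym2.mk_isDiag_iff]
  neg_not_diag := by
    intro e he
    simp only [Finset.mem_image, Finset.mem_univ, true_and] at he
    obtain ⟨i, rfl⟩ := he
    simp [z1, uu, Sym2.mk_isDiag_iff]

/-- The signed double star with a *negative* central edge `z₁z₂`,
`a` positive and `b` negative pendant edges at `z₁`, and `c` positive pendant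
edges at `z₂`. -/
def doubleStarNeg (a b c : ℕ) : SignedGraph (DSV a b c) where
  posEdges :=
    Finset.univ.image (fun i : Fin a => s(z1, vv i)) ∪
      Finset.univ.image (fun i : Fin c => s(z2, ww i))
  negEdges := {s(z1, z2)} ∪ Finset.univ.image (fun i : Fin b => s(z1, uu i))
  disjoint := by
    rw [Finset.disjoint_left]
    intro e he1 he2
    simp only [Finset.mem_union, Finset.mem_singleton, Finset.mem_image,
      Finset.mem_univ, true_and] at he1 he2
    rcases he1 with ⟨i, rfl⟩ | ⟨i, rfl⟩ <;>
      rcases he2 with h | ⟨j, h⟩ <;>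
      simp [z1, z2, vv, uu, ww, Sym2.eq_iff] at h
  pos_not_diag := by
    intro e he
    simp only [Finset.mem_union, Finset.mem_singleton, Finset.mem_image,
      Finset.mem_univ, true_and] at he
    rcases he with ⟨i, rfl⟩ | ⟨i, rfl⟩ <;>
      simp [z1, z2, vv, ww, Sym2.mk_isDiag_iff]
  neg_not_diag := by
    intro e he
    simp only [Finset.mem_union, Finset.mem_singleton, Finset.mem_image,
      Finset.mem_univ, true_and] at he
    rcases he with rfl | ⟨i, rfl⟩ <;>
      simp [z1, z2, uu, Sym2.mk_isDiag_iff]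

/-! Let `m` and `n` be the numbers of positive and negative edges. The negative edges form a star at
`z₁` with labels `1, …, n`. As `n ≥ 2`, this forces `f z₁ = 0`, so the negative neighbours of `z₁`
take the values `1, …, n`, and `f p > n` for every positive leaf `p`. If `p` hangs at the centre
`q`, then `f q ≤ n`, so its edge has label `f p - f q ≥ f p - n`. The `m` numbers `f p - n` are
distinct and positive, while the labels are exactly `1, …, m`; comparing sums, `f q = n` for every
positive edge. Since `f z₁ = 0 < n`, no positive edge is attached at `z₁`. -/

open Finset

theorem eq_of_injOn_of_le_of_image_eq_Icc {ι : Type*} {s : Finset ι} {g L : ι → ℕ}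
    (hinj : Set.InjOn g s) (hpos : ∀ i ∈ s, 1 ≤ g i) (hle : ∀ i ∈ s, g i ≤ L i)
    (hL : s.image L = Icc 1 #s) : ∀ i ∈ s, g i = L i := by
  have hg : s.image g = Icc 1 #s := by
    refine eq_of_subset_of_card_le (fun x hx => ?_) (by simp [card_image_of_injOn hinj])
    obtain ⟨i, hi, rfl⟩ := mem_image.1 hx
    have hLi : L i ∈ Icc 1 #s := hL ▸ mem_image_of_mem L hi
    exact mem_Icc.2 ⟨hpos i hi, (hle i hi).trans (mem_Icc.1 hLi).2⟩
  have hLinj : Set.InjOn L s := card_image_iff.1 (by simp [hL])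
  refine (sum_eq_sum_iff_of_le hle).1 ?_
  calc ∑ i ∈ s, g i = ∑ x ∈ Icc 1 #s, x := by rw [← hg, sum_image hinj]
    _ = ∑ i ∈ s, L i := by rw [← hL, sum_image hLinj]

section SignedGraph

variable {V : Type}

@[simp]
theorem posLabel_mk (f : V → ℕ) (u v : V) : posLabel f s(u, v) = Nat.dist (f u) (f v) := rfl

@[simp]
theorem negLabel_mk (f : V → ℕ) (u v : V) : negLabel f s(u, v) = f u + f v := rfl

variable [DecidableEq V] {S : SignedGraph V} {f : V → ℕ} {z : V}

namespace IsAddGraceful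

theorem injective (hf : IsAddGraceful S f) : Function.Injective f := hf.1

theorem image_posLabel (hf : IsAddGraceful S f) :
    S.posEdges.image (posLabel f) = Icc 1 #S.posEdges := hf.2.2.1

theorem image_negLabel (hf : IsAddGraceful S f) :
    S.negEdges.image (negLabel f) = Icc 1 #S.negEdges := hf.2.2.2

theorem negLabel_le (hf : IsAddGraceful S f) {e : Sym2 V} (he : e ∈ S.negEdges) :
    negLabel f e ≤ #S.negEdges :=
  (mem_Icc.1 (hf.image_negLabel ▸ mem_image_of_mem _ he)).2

theorem exists_add_eq_of_negEdges_star (hf : IsAddGraceful S f) (hz : ∀ e ∈ S.negEdges, z ∈ e)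
    {k : ℕ} (hk : k ∈ Icc 1 #S.negEdges) : ∃ x, s(z, x) ∈ S.negEdges ∧ f z + f x = k := by
  rw [← hf.image_negLabel, mem_image] at hk
  obtain ⟨e, he, rfl⟩ := hk
  obtain ⟨x, rfl⟩ := hz e he
  exact ⟨x, he, rfl⟩

theorem eq_zero_of_negEdges_star (hf : IsAddGraceful S f) (hz : ∀ e ∈ S.negEdges, z ∈ e)
    (hn : 2 ≤ #S.negEdges) : f z = 0 := by
  obtain ⟨x, -, hx⟩ := hf.exists_add_eq_of_negEdges_star hz (mem_Icc.2 ⟨le_rfl, by omega⟩)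
  obtain ⟨y, hy, hzy⟩ := hf.exists_add_eq_of_negEdges_star hz (mem_Icc.2 ⟨one_le_two, hn⟩)
  have hne : f z ≠ f y := hf.injective.ne fun h => S.neg_not_diag _ hy h
  omega

theorem card_negEdges_lt_of_negEdges_star (hf : IsAddGraceful S f)
    (hz : ∀ e ∈ S.negEdges, z ∈ e) (hn : 2 ≤ #S.negEdges) {v : V} (hvz : v ≠ z)
    (hv : ∀ e ∈ S.negEdges, v ∉ e) : #S.negEdges < f v := by
  have hz0 : f z = 0 := hf.eq_zero_of_negEdges_star hz hn
  have hv0 : f v ≠ 0 := hz0 ▸ hf.injective.ne hvz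
  by_contra! hle
  obtain ⟨x, hx, hxv⟩ :=
    hf.exists_add_eq_of_negEdges_star hz (mem_Icc.2 ⟨Nat.one_le_iff_ne_zero.2 hv0, hle⟩)
  obtain rfl : x = v := hf.injective (by omega)
  exact hv _ hx (Sym2.mem_mk_right z x)

theorem apply_eq_card_negEdges_of_posEdges_eq_image {ι : Type*} [Fintype ι] {q p : ι → V}
    (hf : IsAddGraceful S f) (hS : S.posEdges = univ.image fun i => s(q i, p i))
    (hp : Function.Injective p) (hfq : ∀ i, f (q i) ≤ #S.negEdges)
    (hfp : ∀ i, #S.negEdges < f (p i)) (i : ι) : f (q i) = #S.negEdges := by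
  have hedge : Function.Injective fun i => s(q i, p i) := fun i j hij => by
    rcases Sym2.eq_iff.1 hij with ⟨-, h⟩ | ⟨h, -⟩
    · exact hp h
    · exact absurd (hfp j) (h ▸ hfq i).not_gt
  have hlabels : univ.image (fun i => posLabel f s(q i, p i)) = Icc 1 #(univ : Finset ι) := by
    rw [← card_image_of_injective univ hedge, ← hS, ← hf.image_posLabel, hS, image_image]
    rfl
  have hdist (i : ι) : posLabel f s(q i, p i) = f (p i) - f (q i) :=
    Nat.dist_eq_sub_of_le ((hfq i).trans (hfp i).le)
  have hshift : f (p i) - #S.negEdges = posLabel f s(q i, p i) := by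
    refine eq_of_injOn_of_le_of_image_eq_Icc (g := fun i => f (p i) - #S.negEdges)
      (fun j _ k _ hjk => hp (hf.injective ?_)) (fun j _ => Nat.sub_pos_of_lt (hfp j))
      (fun j _ => ?_) hlabels i (mem_univ i)
    · exact (tsub_left_inj (hfp j).le (hfp k).le).1 hjk
    · exact hdist j ▸ Nat.sub_le_sub_left (hfq j) _
  have := hfq i
  have := hfp i
  have := hdist i
  omega

end IsAddGraceful

end SignedGraph

namespace doubleStarNeg

variable {a b c : ℕ}

/-- The centre at which a positive pendant edge of a double star is attached; the edges at `z₁` are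
indexed by `Fin a` and those at `z₂` by `Fin c`. -/
def posCenter : Fin a ⊕ Fin c → DSV a b c := Sum.elim (fun _ => z1) fun _ => z2

/-- The leaf of a positive pendant edge of a double star, indexed as in `posCenter`. -/
def posLeaf : Fin a ⊕ Fin c → DSV a b c := Sum.elim vv ww

/-- The negative neighbours of `z₁` in `doubleStarNeg a b c`; the index `none` stands for the
central edge, so this is `z₂`. -/
def negNeighbor : Option (Fin b) → DSV a b c := fun i => i.elim z2 uu

theorem posLeaf_injective : Function.Injective (posLeaf : _ → DSV a b c) := by
  rintro (i | i) (j | j) h <;> simp_all [posLeaf, vv, ww]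

theorem posEdges_eq :
    (doubleStarNeg a b c).posEdges = univ.image fun i => s(posCenter i, posLeaf i) := by
  ext e
  simp [doubleStarNeg, posCenter, posLeaf]

theorem negEdges_eq :
    (doubleStarNeg a b c).negEdges = univ.image fun i => s(z1, negNeighbor i) := by
  ext e
  simp [doubleStarNeg, negNeighbor, Option.exists, eq_comm]

theorem card_posEdges : #(doubleStarNeg a b c).posEdges = a + c := by
  rw [posEdges_eq, card_image_of_injective]
  · simp
  · rintro (i | i) (j | j) h <;> simp_all [posCenter, posLeaf, z1, z2, vv, ww]

theorem card_negEdges : #(doubleStarNeg a b c).negEdges = b + 1 := by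
  rw [negEdges_eq, card_image_of_injective]
  · simp
  · rintro (_ | i) (_ | j) h <;> simp_all [negNeighbor, z1, z2, uu]

theorem z1_mem_of_mem_negEdges : ∀ e ∈ (doubleStarNeg a b c).negEdges, z1 ∈ e := by
  intro e he
  rw [negEdges_eq, mem_image] at he
  obtain ⟨i, -, rfl⟩ := he
  exact Sym2.mem_mk_left _ _

theorem posLeaf_ne_z1 (i : Fin a ⊕ Fin c) : (posLeaf i : DSV a b c) ≠ z1 := by
  cases i <;> simp [posLeaf, z1, vv, ww]

theorem posLeaf_notMem_of_mem_negEdges (i : Fin a ⊕ Fin c) :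
    ∀ e ∈ (doubleStarNeg a b c).negEdges, posLeaf i ∉ e := by
  intro e he
  rw [negEdges_eq, mem_image] at he
  obtain ⟨_ | k, -, rfl⟩ := he <;> cases i <;>
    simp [posLeaf, negNeighbor, z1, z2, vv, uu, ww]

theorem z1_z2_mem_negEdges : s(z1, z2) ∈ (doubleStarNeg a b c).negEdges := by
  simp [doubleStarNeg]

theorem eq_zero_of_isAddGraceful (hb : b ≠ 0) {f : DSV a b c → ℕ}
    (hf : IsAddGraceful (doubleStarNeg a b c) f) : a = 0 := by
  have hn : 2 ≤ #(doubleStarNeg a b c).negEdges := by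
    rw [card_negEdges]
    omega
  have hz1 : f z1 = 0 := hf.eq_zero_of_negEdges_star z1_mem_of_mem_negEdges hn
  have hz2 : f z2 ≤ #(doubleStarNeg a b c).negEdges :=
    (Nat.le_add_left _ _).trans (hf.negLabel_le z1_z2_mem_negEdges)
  have hcenter (i : Fin a ⊕ Fin c) :
      f (posCenter i) ≤ #(doubleStarNeg a b c).negEdges := by
    cases i with
    | inl => exact hz1.trans_le (Nat.zero_le _)
    | inr => exact hz2
  have hleaf (i : Fin a ⊕ Fin c) : #(doubleStarNeg a b c).negEdges < f (posLeaf i) :=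
    hf.card_negEdges_lt_of_negEdges_star z1_mem_of_mem_negEdges hn
      (posLeaf_ne_z1 i) (posLeaf_notMem_of_mem_negEdges i)
  by_contra ha
  have hz1n : f z1 = #(doubleStarNeg a b c).negEdges :=
    hf.apply_eq_card_negEdges_of_posEdges_eq_image posEdges_eq posLeaf_injective hcenter hleaf
      (Sum.inl ⟨0, Nat.pos_of_ne_zero ha⟩)
  omega

/-- The additively graceful labeling of `doubleStarNeg 0 1 c`: `z₁ ↦ 0`, `u ↦ 1`, `z₂ ↦ 2` and
`wᵢ ↦ i + 3`, with `i` counted from `0`. -/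
def labeling (c : ℕ) : DSV 0 1 c → ℕ
  | .inl (.inl _) => 0
  | .inl (.inr _) => 2
  | .inr (.inr (.inl _)) => 1
  | .inr (.inr (.inr i)) => i + 3

theorem labeling_injective : Function.Injective (labeling c) := by
  rintro ((_ | _) | (i | i | i)) ((_ | _) | (j | j | j)) h <;>
    first | exact i.elim0 | exact j.elim0 | simp_all [labeling, Fin.ext_iff]

theorem labeling_le : ∀ v : DSV 0 1 c, labeling c v ≤ c + 2
  | .inl (.inl _) | .inl (.inr _) | .inr (.inr (.inl _)) => by simp [labeling]
  | .inr (.inr (.inr i)) => by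
    simp only [labeling]
    omega

theorem image_posLabel_labeling :
    (doubleStarNeg 0 1 c).posEdges.image (posLabel (labeling c)) = Icc 1 c := by
  have hlabel (i : Fin c) : posLabel (labeling c) s(z2, ww i) = i + 1 := by
    simp [labeling, z2, ww, Nat.dist]
  ext x
  simp only [doubleStarNeg, univ_eq_empty, image_empty, empty_union, mem_image, mem_univ, true_and,
    exists_exists_eq_and, hlabel, mem_Icc]
  constructor
  · rintro ⟨i, rfl⟩
    omega
  · rintro ⟨hx, hxc⟩
    exact ⟨⟨x - 1, by omega⟩, Nat.sub_add_cancel hx⟩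

theorem image_negLabel_labeling :
    (doubleStarNeg 0 1 c).negEdges.image (negLabel (labeling c)) = Icc 1 2 := by
  calc (doubleStarNeg 0 1 c).negEdges.image (negLabel (labeling c)) = {2, 1} := by
        simp [doubleStarNeg, labeling, z1, z2, uu]
    _ = Icc 1 2 := by decide

theorem isAddGraceful_labeling (c : ℕ) : IsAddGraceful (doubleStarNeg 0 1 c) (labeling c) := by
  refine ⟨labeling_injective, fun v => ?_, ?_, ?_⟩
  · simpa [card_posEdges, card_negEdges] using labeling_le v
  · simpa [card_posEdges] using image_posLabel_labeling
  · simpa [card_negEdges] using image_negLabel_labeling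

end doubleStarNeg

/-- The signed double star with negative central edge `z₁z₂`,
`l` positive pendant edges and one negative pendant edge at `z₁`, and `r`
positive pendant edges at `z₂`, is additively graceful if and only if `l = 0`. -/
theorem doubleStar_negCenter_onePendantNeg_addGraceful_iff (l r : ℕ) :
    (∃ f : DSV l 1 r → ℕ, IsAddGraceful (doubleStarNeg l 1 r) f) ↔ l = 0 := by
  constructor
  · rintro ⟨f, hf⟩
    exact doubleStarNeg.eq_zero_of_isAddGraceful one_ne_zero hf
  · rintro rfl
    exact ⟨doubleStarNeg.labeling r, doubleStarNeg.isAddGraceful_labeling r⟩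
end

section
/- Let S(3,r) be the signed double star consisting of a positive central edge z₁z₂, together with 3 positive pendant edges z₁v₁, z₁v₂, z₁v₃ and two negative pendant edges z₁u₁, z₁u₂ attached at z₁, and r positive pendant edges z₂w₁,…,z₂w_r attached at z₂ (so S(3,r) is a (r+7, r+4, 2) signed graph). If r is odd and r ≥ 7, then S(3,r) is not additively graceful. -/
/-!
Two negative edges force the label `0` on `z₁` and the labels `1`, `2` on the `uᵢ`, and they make
the labeling a bijection onto `{0, …, m + 2}`. So `{3, …, m + 2}` splits into the label `a` of `z₂`,
the set `T` of labels of the `vᵢ` and the set `W` of labels of the `wᵢ`, and the positive edge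
labels are `a`, the elements of `T` and the distances `|a - w|` with `w ∈ W`. For `1 ≤ k ≤ m` only
the points `a - k` and `a + k` lie at distance `k` from `a`, so:

* if neither point lies in `[3, m + 2]`, then `k ∈ T ∪ {a}`;
* if both points lie in `[3, m + 2]`, then one of them belongs to `T`;
* if exactly one point lies in `[3, m + 2]` and it belongs to `T`, then `k ∈ T ∪ {a}`.

These three rules fill `T` so quickly that `#T = 3` and `m ≥ 11` leave only `a = 3`, where
`t ↦ t - 3` almost preserves `T` and `m = 12`, and `a = m`, where `t ↦ m - t` almost preserves `T`
and `m` is even.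
-/

open Finset

/-- The arithmetic content of an additively graceful labeling of a double star with `m` positive
edges and two negative edges at `z₁`: `a`, `T`, `W` are the label of `z₂` and the sets of labels of
the `vᵢ` and of the `wᵢ`. The labels `0, 1, 2` of `z₁` and the `uᵢ` do not appear. -/
structure IsGracefulSplit (m a : ℕ) (T W : Finset ℕ) : Prop where
  vertexLabels : insert a (T ∪ W) = Icc 3 (m + 2)
  edgeLabels : insert a (T ∪ W.image (Nat.dist a)) = Icc 1 m
  center_notMem : a ∉ T
  disjoint : Disjoint T W
  injOn_dist : Set.InjOn (Nat.dist a) W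

namespace IsGracefulSplit

variable {m a k t : ℕ} {T W : Finset ℕ} (h : IsGracefulSplit m a T W)
include h

theorem mem_vertexLabels_iff : k = a ∨ k ∈ T ∨ k ∈ W ↔ 3 ≤ k ∧ k ≤ m + 2 := by
  simpa using Finset.ext_iff.1 h.vertexLabels k

theorem mem_edgeLabels_iff :
    k = a ∨ k ∈ T ∨ (∃ w ∈ W, Nat.dist a w = k) ↔ 1 ≤ k ∧ k ≤ m := by
  simpa using Finset.ext_iff.1 h.edgeLabels k

theorem three_le_center : 3 ≤ a := (h.mem_vertexLabels_iff.1 (.inl rfl)).1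

theorem center_le : a ≤ m := (h.mem_edgeLabels_iff.1 (.inl rfl)).2

theorem three_le_of_mem (ht : t ∈ T) : 3 ≤ t := (h.mem_vertexLabels_iff.1 (.inr (.inl ht))).1

theorem le_of_mem (ht : t ∈ T) : t ≤ m := (h.mem_edgeLabels_iff.1 (.inr (.inl ht))).2

theorem ne_center_of_mem (ht : t ∈ T) : t ≠ a := ne_of_mem_of_not_mem ht h.center_notMem

theorem mem_of_lt_add_three_of_add_two_lt (hkm : k ≤ m) (hka : k ≠ a) (hlow : a < k + 3)
    (hhigh : m + 2 < a + k) : k ∈ T := by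
  rcases h.mem_edgeLabels_iff.2 ⟨by lia, hkm⟩ with rfl | hk | ⟨w, hw, rfl⟩
  · exact absurd rfl hka
  · exact hk
  · have hw' := h.mem_vertexLabels_iff.1 (.inr (.inr hw))
    unfold Nat.dist at *
    lia

theorem sub_mem_or_add_mem (hk : 1 ≤ k) (hlow : k + 3 ≤ a) (hhigh : a + k ≤ m + 2) :
    a - k ∈ T ∨ a + k ∈ T := by
  by_contra! hT
  have hsub : a - k ∈ W :=
    ((h.mem_vertexLabels_iff.2 ⟨by lia, by lia⟩).resolve_left (by lia)).resolve_left hT.1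
  have hadd : a + k ∈ W :=
    ((h.mem_vertexLabels_iff.2 ⟨by lia, by lia⟩).resolve_left (by lia)).resolve_left hT.2
  have := h.injOn_dist hsub hadd (by unfold Nat.dist; lia)
  lia

theorem dist_mem_of_mem (ht : t ∈ T) (hta : Nat.dist a t ≠ a)
    (hend : a < Nat.dist a t + 3 ∨ m + 2 < a + Nat.dist a t) : Nat.dist a t ∈ T := by
  have hne := h.ne_center_of_mem ht
  have ht3 := h.three_le_of_mem ht
  have htm := h.le_of_mem ht
  have ham := h.center_le
  have hrange : 1 ≤ Nat.dist a t ∧ Nat.dist a t ≤ m := by unfold Nat.dist; lia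
  rcases h.mem_edgeLabels_iff.2 hrange with hk | hk | ⟨w, hw, hwt⟩
  · exact absurd hk hta
  · exact hk
  · have hw' := h.mem_vertexLabels_iff.1 (.inr (.inr hw))
    have hwne : t ≠ w := fun e => Finset.disjoint_left.1 h.disjoint ht (e ▸ hw)
    unfold Nat.dist at *
    lia

theorem Ioc_subset (ha : 2 * a ≤ m + 2) : Ioc (m + 2 - a) m ⊆ T := by
  intro k hk
  rw [mem_Ioc] at hk
  exact h.mem_of_lt_add_three_of_add_two_lt hk.2 (by lia) (by lia) (by lia)

theorem center_le_card_add_two (ha : 2 * a ≤ m + 2) : a ≤ #T + 2 := by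
  have hcard := card_le_card (h.Ioc_subset ha)
  rw [Nat.card_Ioc] at hcard
  lia

theorem center_le_card_add_one (ha : 2 * a < m) : a ≤ #T + 1 := by
  have ha3 := h.three_le_center
  have hwindow := h.Ioc_subset (by lia)
  have hdist : Nat.dist a m = m - a := Nat.dist_eq_sub_of_le h.center_le
  have hmem : m - a ∈ T := by
    rw [← hdist]
    exact h.dist_mem_of_mem (hwindow (mem_Ioc.2 (by lia))) (by lia) (by lia)
  have hcard := card_le_card (insert_subset hmem hwindow)
  rw [card_insert_of_notMem (by rw [mem_Ioc]; lia), Nat.card_Ioc] at hcard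
  lia

theorem two_mul_center_le_card_add_four (ha : 3 * a ≤ m + 2) : 2 * a ≤ #T + 4 := by
  have hwindow := h.Ioc_subset (by lia)
  have hshift : Ioc (m + 2 - 2 * a) (m - a) ⊆ T := by
    intro k hk
    rw [mem_Ioc] at hk
    have hdist : Nat.dist a (a + k) = k := by unfold Nat.dist; lia
    have hmem := h.dist_mem_of_mem (hwindow (mem_Ioc.2 ⟨by lia, by lia⟩) : a + k ∈ T)
    rw [hdist] at hmem
    exact hmem (by lia) (by lia)
  have hdisj : Disjoint (Ioc (m + 2 - 2 * a) (m - a)) (Ioc (m + 2 - a) m) :=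
    Finset.disjoint_left.2 fun k hk hk' => by
      rw [mem_Ioc] at hk hk'
      lia
  have hcard := card_le_card (union_subset hshift hwindow)
  rw [card_union_of_disjoint hdisj, Nat.card_Ioc, Nat.card_Ioc] at hcard
  lia

theorem le_center_add_card (ha : m + 2 ≤ 2 * a) : m ≤ a + #T := by
  have hsub : Ioc a m ⊆ T := fun k hk => by
    rw [mem_Ioc] at hk
    exact h.mem_of_lt_add_three_of_add_two_lt hk.2 (by lia) (by lia) (by lia)
  have hcard := card_le_card hsub
  rw [Nat.card_Ioc] at hcard
  lia

theorem add_three_le_center_add_card (ha : m + 5 ≤ 2 * a) (ham : a < m) : m + 3 ≤ a + #T := by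
  have hwindow : (Icc (a - 2) m).erase a ⊆ T := fun k hk => by
    rw [mem_erase, mem_Icc] at hk
    exact h.mem_of_lt_add_three_of_add_two_lt hk.2.2 hk.1 (by lia) (by lia)
  have hmem : a - (m + 2 - a) ∈ T := by
    refine (h.sub_mem_or_add_mem (by lia) (by lia) (by lia)).resolve_right fun hT => ?_
    have := h.le_of_mem hT
    lia
  have hcard := card_le_card (insert_subset hmem hwindow)
  rw [card_insert_of_notMem (by rw [mem_erase, mem_Icc]; lia),
    card_erase_of_mem (by rw [mem_Icc]; lia), Nat.card_Icc] at hcard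
  lia

theorem eq_three_mul_of_center_eq_three (ha : a = 3) (hm : 3 < m) : m = 3 * (#T + 1) := by
  subst ha
  have hmT : m ∈ T := h.mem_of_lt_add_three_of_add_two_lt le_rfl (by lia) (by lia) (by lia)
  have h3 : 3 ∉ T.erase m := fun h3 => h.center_notMem (mem_of_mem_erase h3)
  have hinj : Set.InjOn (· - 3) (T : Set ℕ) := fun s hs t ht hst => by
    have hs3 := h.three_le_of_mem hs
    have ht3 := h.three_le_of_mem ht
    lia
  have hshift : T.image (· - 3) = insert 3 (T.erase m) := by
    refine eq_of_subset_of_card_le (fun k hk => ?_) ?_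
    · obtain ⟨t, ht, rfl⟩ := mem_image.1 hk
      have ht3 := h.three_le_of_mem ht
      have htm := h.le_of_mem ht
      have hmem := h.dist_mem_of_mem ht
      rw [Nat.dist_eq_sub_of_le ht3] at hmem
      grind
    · rw [card_insert_of_notMem h3, card_erase_add_one hmT, card_image_of_injOn hinj]
  have hsum : ∑ t ∈ T, (t - 3) = 3 + ∑ t ∈ T.erase m, t := by
    rw [← sum_insert (f := fun t => t) h3, ← hshift, sum_image hinj]
  have hsub : ∑ t ∈ T, t = ∑ t ∈ T, (t - 3) + #T * 3 := by
    rw [← smul_eq_mul, ← sum_const, ← sum_add_distrib]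
    exact sum_congr rfl fun t ht => (Nat.sub_add_cancel (h.three_le_of_mem ht)).symm
  have herase : ∑ t ∈ T.erase m, t + m = ∑ t ∈ T, t := sum_erase_add T (fun t => t) hmT
  lia

theorem even_of_center_eq_of_odd_card (ha : a = m) (hm : 5 ≤ m) (hT : Odd #T) : Even m := by
  subst ha
  have hpair : {a - 2, a - 1} ⊆ T := by
    rw [insert_subset_iff, singleton_subset_iff]
    constructor <;> exact h.mem_of_lt_add_three_of_add_two_lt (by lia) (by lia) (by lia) (by lia)
  set S := T \ {a - 2, a - 1} with hS
  have hcard : #S + 2 = #T := by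
    rw [← card_pair (show a - 2 ≠ a - 1 by lia), hS, card_sdiff_add_card_eq_card hpair]
  have hlt : ∀ t ∈ S, 3 ≤ t ∧ t + 3 ≤ a := fun t ht => by
    rw [mem_sdiff] at ht
    have ht3 := h.three_le_of_mem ht.1
    have htm := h.le_of_mem ht.1
    have hne := h.ne_center_of_mem ht.1
    grind
  have hreflect : ∀ t ∈ S, a - t ∈ S := fun t ht => by
    have htS := hlt t ht
    have hmem := h.dist_mem_of_mem (mem_sdiff.1 ht).1
    rw [Nat.dist_eq_sub_of_le_right (by lia)] at hmem
    grind
  have hsum : ∑ t ∈ S, t = ∑ t ∈ S, (a - t) :=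
    sum_nbij' (a - ·) (a - ·) hreflect hreflect (fun t ht => by have := hlt t ht; lia)
      (fun t ht => by have := hlt t ht; lia) (fun t ht => by have := hlt t ht; lia)
  have hdouble : #S * a = ∑ t ∈ S, t + ∑ t ∈ S, t := by
    nth_rw 2 [hsum]
    rw [← sum_add_distrib, ← smul_eq_mul, ← sum_const]
    exact sum_congr rfl fun t ht => by have := hlt t ht; lia
  have hodd : ¬ Even #S := by
    rw [← hcard, ← Nat.not_even_iff_odd] at hT
    simpa [Nat.even_add] using hT
  exact (Nat.even_mul.1 ⟨_, hdouble⟩).resolve_left hodd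

theorem even_of_card_eq_three (hT : #T = 3) (hm : 11 ≤ m) : Even m := by
  have ham := h.center_le
  rcases lt_or_ge (2 * a) m with hlow | hge
  · have ha : a = 3 := by
      have ha3 := h.three_le_center
      have ha4 := h.center_le_card_add_one hlow
      have := h.two_mul_center_le_card_add_four (by lia)
      lia
    have := h.eq_three_mul_of_center_eq_three ha (by lia)
    exact ⟨6, by lia⟩
  · rcases lt_or_ge (2 * a) (m + 2) with hmid | hhigh
    · have := h.center_le_card_add_two hmid.le
      lia
    · have hadd := h.le_center_add_card hhigh
      have ha : a = m := by
        by_contra hne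
        have := h.add_three_le_center_add_card (by lia) (by lia)
        lia
      exact h.even_of_center_eq_of_odd_card ha (by lia) (by rw [hT]; decide)

end IsGracefulSplit

section DoubleStar

variable {l b r : ℕ}

theorem card_posEdges_doubleStarPos : #(doubleStarPos l b r).posEdges = l + r + 1 := by
  have hcenter : Disjoint {s(z1, z2)} (univ.image fun i : Fin l => s((z1 : DSV l b r), vv i)) := by
    simp [z1, z2, vv]
  have hleaf : Disjoint ({s(z1, z2)} ∪ univ.image fun i : Fin l => s((z1 : DSV l b r), vv i))
      (univ.image fun i : Fin r => s(z2, ww i)) := by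
    simp [Finset.disjoint_left, z1, z2, vv, ww]
  have hvv : Function.Injective fun i : Fin l => s((z1 : DSV l b r), vv i) := fun i j hij => by
    simpa [z1, vv] using hij
  have hww : Function.Injective fun i : Fin r => s((z2 : DSV l b r), ww i) := fun i j hij => by
    simpa [z2, ww] using hij
  simp only [doubleStarPos]
  rw [card_union_of_disjoint hleaf, card_union_of_disjoint hcenter, card_image_of_injective _ hvv,
    card_image_of_injective _ hww, card_singleton, card_fin, card_fin]
  lia

theorem card_negEdges_doubleStarPos : #(doubleStarPos l b r).negEdges = b := by
  have huu : Function.Injective fun i : Fin b => s((z1 : DSV l b r), uu i) := fun i j hij => by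
    simpa [z1, uu] using hij
  simp only [doubleStarPos]
  rw [card_image_of_injective _ huu, card_fin]

theorem image_posLabel_doubleStarPos (f : DSV l b r → ℕ) :
    (doubleStarPos l b r).posEdges.image (posLabel f) =
      insert (Nat.dist (f z1) (f z2)) ((univ.image fun i => Nat.dist (f z1) (f (vv i))) ∪
        univ.image fun i => Nat.dist (f z2) (f (ww i))) := by
  simp only [doubleStarPos, image_union, image_singleton, image_image, union_assoc, insert_eq]
  rfl

theorem image_negLabel_doubleStarPos (f : DSV l b r → ℕ) :
    (doubleStarPos l b r).negEdges.image (negLabel f) = univ.image fun i => f z1 + f (uu i) := by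
  simp only [doubleStarPos, image_image]
  rfl

end DoubleStar

namespace IsAddGraceful

theorem injOn_posLabel {V : Type} [DecidableEq V] {S : SignedGraph V} {f : V → ℕ}
    (hf : IsAddGraceful S f) : Set.InjOn (posLabel f) S.posEdges := by
  rw [← card_image_iff, hf.2.2.1, Nat.card_Icc, Nat.add_sub_cancel]

variable {l r : ℕ} {f : DSV l 2 r → ℕ} (hf : IsAddGraceful (doubleStarPos l 2 r) f)
include hf

theorem apply_le (v : DSV l 2 r) : f v ≤ l + r + 3 := by
  have hle := hf.2.1 v
  rw [card_posEdges_doubleStarPos, card_negEdges_doubleStarPos] at hle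
  exact hle

theorem image_univ_eq_range : univ.image f = range (l + r + 4) := by
  refine eq_of_subset_of_card_le (fun k hk => ?_) ?_
  · obtain ⟨v, -, rfl⟩ := mem_image.1 hk
    exact mem_range.2 (Nat.lt_succ_of_le (hf.apply_le v))
  · rw [card_image_of_injective _ hf.1, card_range, card_univ]
    simp only [Fintype.card_sum, Fintype.card_unit, Fintype.card_fin]
    lia

theorem apply_z1_add_apply_uu_mem (i : Fin 2) : f z1 + f (uu i) ∈ Icc 1 2 := by
  have hneg := hf.2.2.2
  rw [image_negLabel_doubleStarPos, card_negEdges_doubleStarPos] at hneg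
  rw [← hneg]
  exact mem_image_of_mem _ (mem_univ i)

theorem apply_z1_eq_zero : f z1 = 0 := by
  have hsum₀ := mem_Icc.1 (hf.apply_z1_add_apply_uu_mem 0)
  have hsum₁ := mem_Icc.1 (hf.apply_z1_add_apply_uu_mem 1)
  have hne₀ : f z1 ≠ f (uu 0) := hf.1.ne (by simp [z1, uu])
  have hne₁ : f z1 ≠ f (uu 1) := hf.1.ne (by simp [z1, uu])
  have hne : f (uu 0) ≠ f (uu 1) := hf.1.ne (by simp [uu])
  lia

theorem apply_uu_mem (i : Fin 2) : f (uu i) ∈ Icc 1 2 := by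
  simpa [hf.apply_z1_eq_zero] using hf.apply_z1_add_apply_uu_mem i

theorem three_le_apply {v : DSV l 2 r} (hz1 : v ≠ z1) (huu : ∀ i, v ≠ uu i) : 3 ≤ f v := by
  have hz := hf.apply_z1_eq_zero
  have hu₀ := mem_Icc.1 (hf.apply_uu_mem 0)
  have hu₁ := mem_Icc.1 (hf.apply_uu_mem 1)
  have hne : f (uu 0) ≠ f (uu 1) := hf.1.ne (by simp [uu])
  have hvz := hf.1.ne hz1
  have hv₀ := hf.1.ne (huu 0)
  have hv₁ := hf.1.ne (huu 1)
  lia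

theorem vertexLabels_eq :
    insert (f z2) ((univ.image fun i => f (vv i)) ∪ univ.image fun i => f (ww i)) =
      Icc 3 (l + r + 3) := by
  ext k
  simp only [mem_insert, mem_union, mem_image, mem_univ, true_and, mem_Icc]
  constructor
  · rintro (rfl | ⟨i, rfl⟩ | ⟨i, rfl⟩) <;>
      exact ⟨hf.three_le_apply (by simp [z1, z2, vv, ww]) (by simp [z2, uu, vv, ww]),
        hf.apply_le _⟩
  · rintro ⟨hk3, hkm⟩
    have hk : k ∈ univ.image f := hf.image_univ_eq_range ▸ mem_range.2 (by lia)
    obtain ⟨(⟨⟩ | ⟨⟩) | i | i | i, -, rfl⟩ := mem_image.1 hk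
    · have hz1 : 3 ≤ f z1 := hk3
      exact absurd hf.apply_z1_eq_zero (by lia)
    · exact .inl rfl
    · exact .inr (.inl ⟨i, rfl⟩)
    · exact absurd (mem_Icc.1 (hf.apply_uu_mem i)).2 (Nat.not_le_of_gt hk3)
    · exact .inr (.inr ⟨i, rfl⟩)

theorem edgeLabels_eq :
    insert (f z2) ((univ.image fun i => f (vv i)) ∪
      (univ.image fun i => f (ww i)).image (Nat.dist (f z2))) = Icc 1 (l + r + 1) := by
  have hpos := hf.2.2.1
  rw [image_posLabel_doubleStarPos, card_posEdges_doubleStarPos] at hpos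
  simpa only [hf.apply_z1_eq_zero, Nat.dist_zero_left, image_image, Function.comp_def] using hpos

theorem injOn_dist_apply_z2 :
    Set.InjOn (Nat.dist (f z2)) (univ.image fun i => f (ww i) : Finset ℕ) := by
  have hedge (i : Fin r) : s(z2, ww i) ∈ (doubleStarPos l 2 r).posEdges :=
    mem_union_right _ (mem_image_of_mem _ (mem_univ i))
  simp only [Set.InjOn, mem_coe, mem_image, mem_univ, true_and]
  rintro _ ⟨i, rfl⟩ _ ⟨j, rfl⟩ hij
  have hedges := hf.injOn_posLabel (hedge i) (hedge j) hij
  rw [Sym2.congr_right.1 hedges]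

theorem isGracefulSplit :
    IsGracefulSplit (l + r + 1) (f z2) (univ.image fun i => f (vv i))
      (univ.image fun i => f (ww i)) where
  vertexLabels := hf.vertexLabels_eq
  edgeLabels := hf.edgeLabels_eq
  center_notMem := by simp [hf.1.eq_iff, z2, vv]
  disjoint := by simp [Finset.disjoint_left, hf.1.eq_iff, vv, ww]
  injOn_dist := hf.injOn_dist_apply_z2

theorem card_image_apply_vv : #(univ.image fun i => f (vv i)) = l := by
  rw [card_image_of_injective, card_fin]
  exact hf.1.comp fun i j hij => by simpa [vv] using hij

end IsAddGraceful

/-- The signed double star with positive central edge `z₁z₂`,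
`3` positive and `2` negative pendant edges at `z₁`, and `r` positive pendant
edges at `z₂`, is not additively graceful when `r` is odd and `r ≥ 7`. -/
theorem doubleStar_twoNeg_l3_not_addGraceful_of_odd (r : ℕ) (hodd : Odd r) (hr : 7 ≤ r) :
    ¬ ∃ f : DSV 3 2 r → ℕ, IsAddGraceful (doubleStarPos 3 2 r) f := by
  rintro ⟨f, hf⟩
  have heven : Even (3 + r + 1) :=
    hf.isGracefulSplit.even_of_card_eq_three hf.card_image_apply_vv (by lia)
  exact Nat.not_even_iff_odd.2 (by grind) heven
end
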